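/- Let p be an odd prime, P a finite noncyclic p-group with cyclic center, and Z = Ω₁(Z(P)). Let X be an extraspecial subgroup of P of exponent p with Z(X) = Z. Then X is maximal among subgroups T with Z < T = Ω₁(T) and [T,T] ≤ Z if and only if Ω₁(C_P(X)) = Z. -/

import Mathlib

/-- `G` is extraspecial for the prime `p`: its center has order `p` and `G/Z(G)`
is elementary abelian (nontrivial, abelian of exponent `p`). -/
def IsExtraspecial (p : ℕ) (G : Type*) [Group G] : Prop :=
  Nat.card (Subgroup.center G) = p ∧
  Nontrivial (G ⧸ Subgroup.center G) ∧
  (∀ a b : G ⧸ Subgroup.center G, a * b = b * a) ∧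
  (∀ a : G ⧸ Subgroup.center G, a ^ p = 1)

/-!
If `x ∈ C_P(X)` has order `p`, then `X⟨x⟩` lies in `ℳ_Z(P)`, so maximality of `X` forces
`x ∈ X ∩ C_P(X) = Z`.

Conversely, let `X ≤ T` with `T = Ω₁(T)` and `[T, T] ≤ Z`. Since `p` is odd and `T` has class at
most two, `T` has exponent `p`. The commutator induces an injection of `X/Z` into `Hom(X/Z, Z)`,
which has at most `|X/Z|` elements because `Z` is cyclic. So each homomorphism `x ↦ [t, x]` with
`t ∈ T` agrees with `x ↦ [y, x]` for some `y ∈ X`, that is, `t ∈ y C_P(X)`. As `y⁻¹t` has order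
dividing `p`, it lies in `Ω₁(C_P(X)) = Z`.
-/

section Duality

variable {A C : Type*} [CommGroup C] [IsCyclic C] [Finite C]

variable (C) in
theorem exists_injective_monoidHom_units_complex :
    ∃ ι : C →* ℂˣ, Function.Injective ι := by
  have : NeZero (Nat.card C) := ⟨Nat.card_pos.ne'⟩
  let e : C ≃* rootsOfUnity (Nat.card C) ℂ :=
    mulEquivOfCyclicCardEq (Complex.card_rootsOfUnity _).symm
  exact ⟨(Subgroup.subtype _).comp e.toMonoidHom, Subtype.val_injective.comp e.injective⟩

variable (A C) in
theorem card_monoidHom_le_card [CommGroup A] [Finite A] :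
    Nat.card (A →* C) ≤ Nat.card A := by
  obtain ⟨ι, hι⟩ := exists_injective_monoidHom_units_complex C
  have : NeZero (Monoid.exponent A) := ⟨Monoid.exponent_ne_zero_of_finite⟩
  have card_dual := CommGroup.card_monoidHom_of_hasEnoughRootsOfUnity A ℂ
  have : Finite (A →* ℂˣ) := Nat.finite_of_card_ne_zero (card_dual ▸ Nat.card_pos.ne')
  rw [← card_dual]
  exact Nat.card_le_card_of_injective ι.comp fun _ _ ↦ (MonoidHom.cancel_left hι).1

theorem mem_range_of_ker_le_ker [Group A] [Finite A] (β : A →* A →* C)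
    (hβ : ∀ a, β.ker ≤ (β a).ker) {χ : A →* C} (hχ : β.ker ≤ χ.ker) : χ ∈ β.range := by
  have : Finite (A →* C) := DFunLike.finite _
  have ker_le (ψ : β.range) : β.rangeRestrict.ker ≤ ψ.1.ker := by
    obtain ⟨_, a, rfl⟩ := ψ
    exact β.ker_rangeRestrict.trans_le (hβ a)
  let f (ψ : β.range) : {ψ : A →* C // β.rangeRestrict.ker ≤ ψ.ker} := ⟨ψ, ker_le ψ⟩
  have f_injective : f.Injective := fun _ _ h ↦ Subtype.ext (congrArg (·.1) h)
  have card_le : Nat.card {ψ : A →* C // β.rangeRestrict.ker ≤ ψ.ker} ≤ Nat.card β.range :=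
    (Nat.card_congr (β.rangeRestrict.liftOfSurjective β.rangeRestrict_surjective)).trans_le
      (card_monoidHom_le_card β.range C)
  obtain ⟨ψ, hψ⟩ := (f_injective.bijective_of_nat_card_le card_le).surjective
    ⟨χ, β.ker_rangeRestrict.trans_le hχ⟩
  have coe_eq : (ψ : A →* C) = χ := congrArg (·.1) hψ
  exact coe_eq ▸ ψ.2

end Duality

section Commutators

open Subgroup
open scoped commutatorElement IsMulCommutative

variable {G : Type*} [Group G] {S X Z : Subgroup G}

theorem normal_of_le_center (hZ : Z ≤ center G) : Z.Normal where
  conj_mem z hz g := by rwa [mem_center_iff.1 (hZ hz) g, mul_inv_cancel_right]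

theorem commutator_sup_le_iff {H K L N : Subgroup G} [N.Normal] :
    ⁅H ⊔ K, L⁆ ≤ N ↔ ⁅H, L⁆ ≤ N ∧ ⁅K, L⁆ ≤ N := by
  have le_iff (M : Subgroup G) : ⁅M, L⁆ ≤ N ↔
      M.map (QuotientGroup.mk' N) ≤ centralizer (L.map (QuotientGroup.mk' N)) := by
    rw [← commutator_eq_bot_iff_le_centralizer, ← map_commutator, Subgroup.map_eq_bot_iff,
      QuotientGroup.ker_mk']
  simp only [le_iff, Subgroup.map_sup, sup_le_iff]

theorem map_subtype_center (H : Subgroup G) :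
    (center H).map H.subtype = H ⊓ centralizer H := by
  ext g
  simp [mem_center_iff, mem_centralizer_iff, Subtype.ext_iff, and_comm]

theorem IsExtraspecial.commutator_le_inf_centralizer {p : ℕ} (hX : IsExtraspecial p X) :
    ⁅X, X⁆ ≤ X ⊓ centralizer X := by
  obtain ⟨-, -, quotient_comm, -⟩ := hX
  rw [← map_subtype_center, ← map_subtype_commutator]
  exact map_mono (Normal.quotient_commutative_iff_commutator_le.1 ⟨⟨quotient_comm⟩⟩)

theorem commutatorElement_mul_left_of_mem_center {a b c : G} (h : ⁅b, c⁆ ∈ center G) :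
    ⁅a * b, c⁆ = ⁅a, c⁆ * ⁅b, c⁆ := by
  rw [commutatorElement_mul_left_eq_conj_mul, mem_center_iff.1 h a, mul_inv_cancel_right,
    mem_center_iff.1 h]

theorem commutatorElement_mul_right_of_mem_center {a b c : G} (h : ⁅a, c⁆ ∈ center G) :
    ⁅a, b * c⁆ = ⁅a, b⁆ * ⁅a, c⁆ := by
  rw [commutatorElement_mul_right_eq_mul_conj, mul_assoc ⁅a, b⁆, mem_center_iff.1 h b,
    ← mul_assoc, mul_inv_cancel_right]

/-- The bimultiplicative map `(s, x) ↦ ⁅s, x⁆` on `S × X`, for `⁅S, X⁆` contained in a central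
subgroup `Z`. Commutativity of `Z` is an instance argument so that `X →* Z` is a group. -/
def commutatorPairing [IsMulCommutative Z] (hZ : Z ≤ center G) (h : ⁅S, X⁆ ≤ Z) :
    S →* X →* Z :=
  have mem_Z (s : S) (x : X) : ⁅(s : G), (x : G)⁆ ∈ Z := h (commutator_mem_commutator s.2 x.2)
  MonoidHom.mk'
    (fun s ↦ MonoidHom.mk' (fun x ↦ ⟨⁅(s : G), (x : G)⁆, mem_Z s x⟩) fun _ y ↦
      Subtype.ext (commutatorElement_mul_right_of_mem_center (hZ (mem_Z s y))))
    fun _ t ↦ MonoidHom.ext fun x ↦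
      Subtype.ext (commutatorElement_mul_left_of_mem_center (hZ (mem_Z t x)))

theorem coe_commutatorPairing_apply [IsMulCommutative Z] (hZ : Z ≤ center G) (h : ⁅S, X⁆ ≤ Z)
    (s : S) (x : X) : (commutatorPairing hZ h s x : G) = ⁅(s : G), (x : G)⁆ :=
  rfl

theorem mem_ker_commutatorPairing [IsMulCommutative Z] (hZ : Z ≤ center G) (h : ⁅S, X⁆ ≤ Z)
    {s : S} : s ∈ (commutatorPairing hZ h).ker ↔ (s : G) ∈ centralizer X := by
  simp [MonoidHom.mem_ker, MonoidHom.ext_iff, Subtype.ext_iff, coe_commutatorPairing_apply,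
    commutatorElement_eq_one_iff_mul_comm, mem_centralizer_iff, eq_comm]

theorem inv_mul_mem_centralizer_of_commutatorElement_eq {a b : G}
    (h : ∀ x ∈ X, ⁅a, x⁆ = ⁅b, x⁆) : a⁻¹ * b ∈ centralizer X := by
  refine mem_centralizer_iff.2 fun x hx ↦ ?_
  have conj_eq : a * x * a⁻¹ = b * x * b⁻¹ := mul_right_cancel (h x hx)
  calc x * (a⁻¹ * b) = a⁻¹ * (a * x * a⁻¹) * b := by group
    _ = a⁻¹ * b * x := by rw [conj_eq]; group

theorem exists_inv_mul_mem_centralizer_of_commutator_le [Finite X] [IsCyclic Z] [Finite Z]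
    (hZ : Z ≤ center G) (hX : X ⊓ centralizer X ≤ center G) (hXX : ⁅X, X⁆ ≤ Z)
    (hSX : ⁅S, X⁆ ≤ Z) {s : G} (hs : s ∈ S) : ∃ x ∈ X, x⁻¹ * s ∈ centralizer X := by
  let β := commutatorPairing hZ hXX
  have center_of_mem_ker {x : X} (hx : x ∈ β.ker) : (x : G) ∈ center G :=
    hX ⟨x.2, (mem_ker_commutatorPairing hZ hXX).1 hx⟩
  have ker_le {T : Subgroup G} (hT : ⁅T, X⁆ ≤ Z) (t : T) :
      β.ker ≤ (commutatorPairing hZ hT t).ker := fun x hx ↦ Subtype.ext <|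
    commutatorElement_eq_one_iff_mul_comm.2 (mem_center_iff.1 (center_of_mem_ker hx) t)
  obtain ⟨x, hx⟩ := mem_range_of_ker_le_ker β (ker_le hXX) (ker_le hSX ⟨s, hs⟩)
  refine ⟨x, x.2, inv_mul_mem_centralizer_of_commutatorElement_eq fun y hy ↦ ?_⟩
  exact congrArg Subtype.val (DFunLike.congr_fun hx ⟨y, hy⟩)

theorem mul_pow_eq_mul_commutatorElement_pow_choose_two {a b : G} (ha : Commute ⁅b, a⁆ a)
    (hb : Commute ⁅b, a⁆ b) (n : ℕ) : (a * b) ^ n = a ^ n * b ^ n * ⁅b, a⁆ ^ n.choose 2 := by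
  have semiconj : SemiconjBy a (⁅b, a⁆ * b) b := by
    rw [SemiconjBy, ← mul_assoc, ← ha.eq, commutatorElement_def]
    group
  induction n with
  | zero => simp
  | succ n ih =>
    have pow_mul_left : b ^ n * a = a * (⁅b, a⁆ ^ n * b ^ n) := by
      rw [← hb.mul_pow, (semiconj.pow_right n).eq]
    have hab : Commute (⁅b, a⁆ ^ n.choose 2) (a * b) := (ha.mul_right hb).pow_left _
    calc (a * b) ^ (n + 1)
        = a ^ n * (b ^ n * a) * b * ⁅b, a⁆ ^ n.choose 2 := by
          rw [pow_succ, ih, mul_assoc, hab.eq]; simp only [mul_assoc]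
      _ = a ^ (n + 1) * (⁅b, a⁆ ^ n * b ^ (n + 1)) * ⁅b, a⁆ ^ n.choose 2 := by
          rw [pow_mul_left, pow_succ, pow_succ]; simp only [mul_assoc]
      _ = a ^ (n + 1) * b ^ (n + 1) * ⁅b, a⁆ ^ (n + 1).choose 2 := by
          rw [(hb.pow_pow n (n + 1)).eq, Nat.choose_succ_succ', Nat.choose_one_right,
            pow_add ⁅b, a⁆]
          simp only [mul_assoc]

end Commutators

section OmegaOne

open Subgroup
open scoped commutatorElement

variable {G : Type*} [Group G] {n : ℕ} {H K : Subgroup G}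

/-- The subgroup `Ω₁(H)` generated by the elements of `H` whose order divides `n`; in a `p`-group
one takes `n = p`. -/
def omegaOne (n : ℕ) (H : Subgroup G) : Subgroup G :=
  closure {x : G | x ∈ H ∧ x ^ n = 1}

theorem mem_omegaOne_of_pow_eq_one {x : G} (hx : x ∈ H) (hxn : x ^ n = 1) : x ∈ omegaOne n H :=
  subset_closure ⟨hx, hxn⟩

theorem omegaOne_le (n : ℕ) (H : Subgroup G) : omegaOne n H ≤ H :=
  (closure_le H).2 fun _ hx ↦ hx.1

theorem omegaOne_mono (h : H ≤ K) : omegaOne n H ≤ omegaOne n K :=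
  closure_mono fun _ hx ↦ ⟨h hx.1, hx.2⟩

theorem omegaOne_eq_self_of_forall_pow_eq_one (h : ∀ x ∈ H, x ^ n = 1) : omegaOne n H = H :=
  (omegaOne_le n H).antisymm fun x hx ↦ mem_omegaOne_of_pow_eq_one hx (h x hx)

theorem omegaOne_sup_eq_self (hH : omegaOne n H = H) (hK : omegaOne n K = K) :
    omegaOne n (H ⊔ K) = H ⊔ K := by
  refine (omegaOne_le n _).antisymm (sup_le ?_ ?_)
  · exact hH.symm.trans_le (omegaOne_mono le_sup_left)
  · exact hK.symm.trans_le (omegaOne_mono le_sup_right)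

theorem dvd_choose_two_of_odd (hn : Odd n) : n ∣ n.choose 2 := by
  obtain ⟨k, rfl⟩ := hn
  exact ⟨k, by rw [Nat.choose_two_right, Nat.add_sub_cancel, Nat.mul_left_comm,
    Nat.mul_div_cancel_left _ two_pos]⟩

theorem pow_eq_one_of_mem_omegaOne (hn : Odd n) (hcenter : ⁅H, H⁆ ≤ center G)
    (hpow : ∀ c ∈ ⁅H, H⁆, c ^ n = 1) {x : G} (hx : x ∈ omegaOne n H) : x ^ n = 1 := by
  induction hx using closure_induction with
  | mem x hx => exact hx.2
  | one => exact one_pow n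
  | inv x _ hxn => rw [inv_pow, hxn, inv_one]
  | mul x y hx hy hxn hyn =>
    have commutator_mem : ⁅y, x⁆ ∈ ⁅H, H⁆ :=
      commutator_mem_commutator (omegaOne_le n H hy) (omegaOne_le n H hx)
    have commute (g : G) : Commute ⁅y, x⁆ g := (mem_center_iff.1 (hcenter commutator_mem) g).symm
    obtain ⟨k, hk⟩ := dvd_choose_two_of_odd hn
    rw [mul_pow_eq_mul_commutatorElement_pow_choose_two (commute x) (commute y), hxn, hyn, hk,
      pow_mul, hpow _ commutator_mem, one_pow, one_mul, one_mul]

end OmegaOne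

section Maximality

open Subgroup

variable {G : Type*} [Group G] {n : ℕ} {X Z : Subgroup G}

theorem omegaOne_centralizer_le_of_maximal (hexp : ∀ x ∈ X, x ^ n = 1) (hZ : Z ≤ center G)
    (hXX : ⁅X, X⁆ ≤ Z) (hZX : X ⊓ centralizer X = Z)
    (hmax : ∀ T : Subgroup G, Z < T → T = omegaOne n T → ⁅T, T⁆ ≤ Z → X ≤ T → T = X) :
    omegaOne n (centralizer X) ≤ Z := by
  refine (closure_le Z).2 fun x ⟨hxX, hxn⟩ ↦ ?_
  by_contra hxZ
  have := normal_of_le_center hZ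
  let T := X ⊔ zpowers x
  have hxT : x ∈ T := mem_sup_right (mem_zpowers x)
  have hZT : Z < T := SetLike.lt_iff_le_and_exists.2
    ⟨hZX.symm.trans_le (inf_le_left.trans le_sup_left), x, hxT, hxZ⟩
  have hTgen : omegaOne n T = T := by
    refine omegaOne_sup_eq_self (omegaOne_eq_self_of_forall_pow_eq_one hexp)
      (omegaOne_eq_self_of_forall_pow_eq_one ?_)
    rintro _ ⟨k, rfl⟩
    rw [← zpow_natCast, zpow_comm, zpow_natCast, hxn, one_zpow]
  have zpowers_commutator_X : ⁅zpowers x, X⁆ ≤ Z :=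
    (commutator_eq_bot_iff_le_centralizer.2 (zpowers_le.2 hxX)).trans_le bot_le
  have zpowers_commutator_self : ⁅zpowers x, zpowers x⁆ ≤ Z :=
    (commutator_self_eq_bot_iff.2 inferInstance).trans_le bot_le
  have hTT : ⁅T, T⁆ ≤ Z := by
    rw [commutator_sup_le_iff, commutator_comm X, commutator_comm (zpowers x),
      commutator_sup_le_iff, commutator_sup_le_iff, commutator_comm X (zpowers x)]
    exact ⟨⟨hXX, zpowers_commutator_X⟩, zpowers_commutator_X, zpowers_commutator_self⟩
  exact hxZ (hZX ▸ ⟨hmax T hZT hTgen.symm hTT le_sup_left ▸ hxT, hxX⟩)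

theorem le_of_omegaOne_centralizer_le [Finite X] [IsCyclic Z] (hn : Odd n)
    (hexp : ∀ x ∈ X, x ^ n = 1) (hZ : Z ≤ center G) (hZX : X ⊓ centralizer X = Z)
    (hOmega : omegaOne n (centralizer X) ≤ Z) {T : Subgroup G} (hTgen : T = omegaOne n T)
    (hTT : ⁅T, T⁆ ≤ Z) (hXT : X ≤ T) : T ≤ X := by
  intro t ht
  have hZleX : Z ≤ X := hZX.symm.trans_le inf_le_left
  have : Finite Z := Finite.of_injective _ (inclusion_injective hZleX)
  obtain ⟨x, hx, hxt⟩ := exists_inv_mul_mem_centralizer_of_commutator_le hZ (hZX.trans_le hZ)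
    ((commutator_mono hXT hXT).trans hTT) ((commutator_mono le_rfl hXT).trans hTT) ht
  have hxtn : (x⁻¹ * t) ^ n = 1 :=
    pow_eq_one_of_mem_omegaOne hn (hTT.trans hZ) (fun c hc ↦ hexp c (hZleX (hTT hc)))
      (hTgen ▸ mul_mem (inv_mem (hXT hx)) ht)
  exact (mul_mem_cancel_left (inv_mem hx)).1
    (hZleX (hOmega (mem_omegaOne_of_pow_eq_one hxt hxtn)))

theorem stmt_8_general [Finite X] [IsCyclic Z] (hn : Odd n) (hexp : ∀ x ∈ X, x ^ n = 1)
    (hZ : Z ≤ center G) (hXX : ⁅X, X⁆ ≤ Z) (hZX : X ⊓ centralizer X = Z) :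
    (∀ T : Subgroup G, Z < T → T = omegaOne n T → ⁅T, T⁆ ≤ Z → X ≤ T → T = X) ↔
      omegaOne n (centralizer X) = Z := by
  constructor
  · intro hmax
    refine (omegaOne_centralizer_le_of_maximal hexp hZ hXX hZX hmax).antisymm fun z hz ↦ ?_
    obtain ⟨hzX, hzC⟩ : z ∈ X ⊓ centralizer X := hZX ▸ hz
    exact mem_omegaOne_of_pow_eq_one hzC (hexp z hzX)
  · intro hOmega T _ hTgen hTT hXT
    exact (le_of_omegaOne_centralizer_le hn hexp hZ hZX hOmega.le hTgen hTT hXT).antisymm hXT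

end Maximality

/-- Let `p` be an odd prime, `P` a finite noncyclic `p`-group with cyclic center,
`Z = Ω₁(Z(P))`, and `X ≤ P` extraspecial of exponent `p` with `Z(X) = Z`.
Then `X` is maximal in `ℳ_Z(P) = {T ≤ P : Z < T = Ω₁(T), [T,T] ≤ Z}` if and
only if `Ω₁(C_P(X)) = Z`. -/
theorem stmt_8 {p : ℕ} (hp : p.Prime) (hodd : Odd p)
    {P : Type*} [Group P] [Finite P] (hP : IsPGroup p P) (hnc : ¬ IsCyclic P)
    (hcyc : IsCyclic (Subgroup.center P))
    (Z : Subgroup P)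
    (hZ : Z = Subgroup.closure {x : P | x ∈ Subgroup.center P ∧ x ^ p = 1})
    (X : Subgroup P) (hX : IsExtraspecial p X)
    (hexp : ∀ x ∈ X, x ^ p = 1)
    (hZX : X ⊓ Subgroup.centralizer (X : Set P) = Z) :
    (∀ T : Subgroup P, Z < T →
        T = Subgroup.closure {x : P | x ∈ T ∧ x ^ p = 1} →
        ⁅T, T⁆ ≤ Z → X ≤ T → T = X) ↔
      Subgroup.closure
          {x : P | x ∈ Subgroup.centralizer (X : Set P) ∧ x ^ p = 1} = Z := by
  have hZc : Z ≤ Subgroup.center P := hZ.trans_le (omegaOne_le p _)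
  have : IsCyclic Z := Subgroup.isCyclic_of_le hZc
  exact stmt_8_general hodd hexp hZc (hX.commutator_le_inf_centralizer.trans_eq hZX) hZX
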